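/- The graph ΘΘ₆ is not a spanner: for every real t there exists a finite set S of points in the plane in general position and points u, v ∈ S such that every path between u and v in ΘΘ₆(S) has length greater than t·|uv|. -/

import Mathlib

/-! Write points as `x + y·ω` with `ω = exp(iπ/3)` and put `s = x + y`. In general position the
cone of `u` containing `v` is determined by the signs of the differences of `x`, `y` and `s`, and
the projective distance is `√3/2` times the hexagonal norm `max |Δx| |Δy| |Δs|` (`coneIdx_pt`).
Hence `ΘΘ₆` is a combinatorial object (`Theta`, `ThetaTheta`) depending only on `x` and `y`.

The proof builds point sets (`Config`) with a lowest-left point `P`, a highest-right point `Q` and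
a potential `φ` which is 1-Lipschitz along the edges of `ΘΘ₆`; every path from `P` to `Q` is then at
least `φ Q - φ P` long (`sub_le_pathLength`), whereas `|PQ| ≤ W + H`, where `W` and `H` are the
extents in `x` and `y`.

A configuration is doubled (`Config.double`) by placing a second copy to the right of the first,
far enough that all its `x` and `s` values are larger, and raised by a tiny `ε`. Two more points are
added: `b₁`, close to and slightly below the point `Q` of the first copy, and `b₂`, close to and
slightly above the point `P` of the second. Every `Θ₆`-edge between the copies is then blocked by one
of `Q`, `P`, `b₁`, `b₂`, or is discarded in favour of a shorter incoming edge, so the two copies are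
connected only along `Q – b₁ – b₂ – P`. Since `b₁` is at the top and `b₂` at the bottom, the step
`b₁ b₂` costs at least `H / 4`. The potential difference `L` therefore becomes `2 L + H / 4`, while
`W + H` becomes `2 (W + H) + 5 ε`. Exchanging the roles of `x` and `y` between two doublings keeps
`W ≤ H`, so `L / (W + H)` grows by at least `1 / 32` in each step (`Config.exists_config`). -/

open Real

noncomputable section

/-- Counterclockwise angle in `[0, 2π)` from the positive x-axis to the direction of `z`. -/
def argIn (z : ℂ) : ℝ := if 0 ≤ Complex.arg z then Complex.arg z else Complex.arg z + 2 * π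

/-- The half-open cone `C_i(u)` with apex `u`: points `p ≠ u` whose direction from `u` has
counterclockwise angle in `[(i-1)π/3, iπ/3)`. -/
def cone (i : ℕ) (u : ℂ) : Set ℂ :=
  {p | p ≠ u ∧ argIn (p - u) ∈ Set.Ico (((i : ℝ) - 1) * (π / 3)) ((i : ℝ) * (π / 3))}

/-- The index `i ∈ {1, …, 6}` of the cone of `u` containing `v`. -/
def coneIdx (u v : ℂ) : ℕ := (⌊argIn (v - u) / (π / 3)⌋).toNat + 1

/-- The angle of the bisector ray of the cone of `u` containing `v`. -/
def bisAngle (u v : ℂ) : ℝ := ((coneIdx u v : ℝ) - 1) * (π / 3) + π / 6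

/-- The projective distance from `u` to `v`: the Euclidean distance from `u` to the
orthogonal projection of `v` onto the bisector ray of the cone of `u` containing `v`. -/
def projDist (u v : ℂ) : ℝ :=
  ((v - u) * Complex.exp (-(Complex.I * (bisAngle u v : ℂ)))).re

/-- `S` is in general position: no two points of `S` lie on a common line parallel to one of
the six rays from the origin at angles `jπ/3`. -/
def GenPos (S : Finset ℂ) : Prop :=
  ∀ u ∈ S, ∀ v ∈ S, u ≠ v → ∀ j : ℕ, argIn (v - u) ≠ (j : ℝ) * (π / 3)

/-- `S` is in convex position: every point of `S` is an extreme point of the convex hull. -/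
def ConvexPos (S : Finset ℂ) : Prop :=
  ∀ p ∈ S, p ∈ Set.extremePoints ℝ (convexHull ℝ (S : Set ℂ))

/-- `u → v` is a directed edge of `Θ₆(S)`: `v` minimizes the projective distance from `u`
among the points of `S` in the cone of `u` containing `v`. -/
def ThetaEdge (S : Finset ℂ) (u v : ℂ) : Prop :=
  u ∈ S ∧ v ∈ S ∧ v ≠ u ∧
    ∀ w ∈ S, w ∈ cone (coneIdx u v) u → projDist u v ≤ projDist u w

/-- `u → v` is a directed edge of `ΘΘ₆(S)`: it is an edge of `Θ₆(S)` and among all incoming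
`Θ₆`-edges `w → v` with `w` in the same cone of `v` as `u`, it minimizes `‖wv‖`. -/
def ThetaThetaEdge (S : Finset ℂ) (u v : ℂ) : Prop :=
  ThetaEdge S u v ∧
    ∀ w, ThetaEdge S w v → coneIdx v w = coneIdx v u → projDist u v ≤ projDist w v

/-- Undirected adjacency in `ΘΘ₆(S)`: paths may use edges in either direction. -/
def TTAdj (S : Finset ℂ) (u v : ℂ) : Prop := ThetaThetaEdge S u v ∨ ThetaThetaEdge S v u

/-- `p` is a path between `u` and `v` with respect to the adjacency relation `A`. -/
def IsPath (A : ℂ → ℂ → Prop) (u v : ℂ) (p : List ℂ) : Prop :=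
  p.Chain' A ∧ p.head? = some u ∧ p.getLast? = some v

/-- The Euclidean length of the polygonal path through the points of `p`. -/
def pathLength (p : List ℂ) : ℝ := (List.zipWith dist p p.tail).sum


/-! ### Theta graphs in oblique coordinates -/

variable {ι : Type}

/-- The points `j` and `k` lie in the same cone of `i`: the differences of `x`, `y` and `x + y` have
the same signs. This describes the cones only for points in general position. -/
def SameCone (x y : ι → ℝ) (i j k : ι) : Prop :=
  (x i < x j ↔ x i < x k) ∧ (y i < y j ↔ y i < y k) ∧ (x i + y i < x j + y j ↔ x i + y i < x k + y k)

/-- The hexagonal distance in oblique coordinates, which is `2/√3` times the projective distance. -/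
def hexDist (x y : ι → ℝ) (i j : ι) : ℝ :=
  max |x j - x i| (max |y j - y i| |(x j + y j) - (x i + y i)|)

/-- The Euclidean distance of `x i + y i·ω` and `x j + y j·ω`, where `ω = exp(iπ/3)`. -/
def eucl (x y : ι → ℝ) (i j : ι) : ℝ :=
  √((x j - x i) ^ 2 + (x j - x i) * (y j - y i) + (y j - y i) ^ 2)

/-- The directed edges of `Θ₆` in oblique coordinates. -/
def Theta (x y : ι → ℝ) (i j : ι) : Prop :=
  i ≠ j ∧ ∀ k, k ≠ i → SameCone x y i j k → hexDist x y i j ≤ hexDist x y i k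

/-- The directed edges of `ΘΘ₆` in oblique coordinates. -/
def ThetaTheta (x y : ι → ℝ) (i j : ι) : Prop :=
  Theta x y i j ∧ ∀ k, Theta x y k j → SameCone x y j i k → hexDist x y i j ≤ hexDist x y k j

/-- `j` lies in the cone of `i` with directions between `0` and `π/3`. -/
def NE (x y : ι → ℝ) (i j : ι) : Prop := x i < x j ∧ y i < y j

/-- `j` lies in the cone of `i` with directions between `-π/3` and `0`. The hexagonal
distance in this cone is the difference of `x`. -/
def SE (x y : ι → ℝ) (i j : ι) : Prop := x i < x j ∧ y j < y i ∧ x i + y i < x j + y j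

theorem hexDist_comm (x y : ι → ℝ) (i j : ι) : hexDist x y i j = hexDist x y j i := by
  simp only [hexDist, abs_sub_comm]

theorem hexDist_NE {x y : ι → ℝ} {i j : ι} (h : NE x y i j) :
    hexDist x y i j = (x j + y j) - (x i + y i) := by
  obtain ⟨h1, h2⟩ := h
  unfold hexDist
  rw [abs_of_pos (by linarith), abs_of_pos (by linarith), abs_of_pos (by linarith),
    max_eq_right (a := y j - y i) (by linarith), max_eq_right (by linarith)]

theorem hexDist_SE {x y : ι → ℝ} {i j : ι} (h : SE x y i j) :
    hexDist x y i j = x j - x i := by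
  obtain ⟨h1, h2, h3⟩ := h
  unfold hexDist
  rw [abs_of_pos (by linarith), abs_of_neg (by linarith), abs_of_pos (by linarith),
    max_eq_left (max_le (by linarith) (by linarith))]

theorem sameCone_NE {x y : ι → ℝ} {i j k : ι} (h : NE x y i j) :
    SameCone x y i j k ↔ NE x y i k := by
  unfold SameCone NE at *; constructor
  · rintro ⟨a, b, c⟩; exact ⟨a.1 h.1, b.1 h.2⟩
  · rintro ⟨a, b⟩
    exact ⟨by simp [*], by simp [*], by constructor <;> intro <;> linarith [h.1, h.2]⟩

theorem sameCone_SE {x y : ι → ℝ} {i j k : ι} (h : SE x y i j) (hk : y k ≠ y i) :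
    SameCone x y i j k ↔ SE x y i k := by
  unfold SameCone SE at *; constructor
  · rintro ⟨a, b, c⟩
    refine ⟨a.1 h.1, lt_of_le_of_ne (not_lt.1 fun hh => ?_) hk, c.1 h.2.2⟩
    linarith [b.2 hh, h.2.1]
  · rintro ⟨a, b, c⟩
    exact ⟨by simp [*], by constructor <;> intro <;> linarith [h.2.1], by simp [*]⟩

theorem sameCone_NE_rev {x y : ι → ℝ} {i j k : ι} (h : NE x y j i) (hx : x k ≠ x i)
    (hy : y k ≠ y i) : SameCone x y i j k ↔ NE x y k i := by
  unfold SameCone NE at *; constructor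
  · rintro ⟨a, b, c⟩
    refine ⟨lt_of_le_of_ne (not_lt.1 fun hh => ?_) hx, lt_of_le_of_ne (not_lt.1 fun hh => ?_) hy⟩
    · linarith [a.2 hh, h.1]
    · linarith [b.2 hh, h.2]
  · rintro ⟨a, b⟩
    refine ⟨?_, ?_, ?_⟩ <;> constructor <;> intro <;> linarith [h.1, h.2]

theorem sameCone_SE_rev {x y : ι → ℝ} {i j k : ι} (h : SE x y j i) (hx : x k ≠ x i)
    (hs : x k + y k ≠ x i + y i) : SameCone x y i j k ↔ SE x y k i := by
  unfold SameCone SE at *; constructor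
  · rintro ⟨a, b, c⟩
    refine ⟨lt_of_le_of_ne (not_lt.1 fun hh => ?_) hx, b.1 h.2.1,
      lt_of_le_of_ne (not_lt.1 fun hh => ?_) hs⟩
    · linarith [a.2 hh, h.1]
    · linarith [c.2 hh, h.2.2]
  · rintro ⟨a, b, c⟩
    refine ⟨?_, ?_, ?_⟩ <;> constructor <;> intro <;> linarith [h.1, h.2.1, h.2.2]

theorem NE.ne {x y : ι → ℝ} {i j : ι} (h : NE x y i j) : i ≠ j := by
  rintro rfl; exact lt_irrefl _ h.1

theorem SE.ne {x y : ι → ℝ} {i j : ι} (h : SE x y i j) : i ≠ j := by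
  rintro rfl; exact lt_irrefl _ h.1

section edges
variable {x y : ι → ℝ} {i j k : ι}

/-- General position: the coordinates `x`, `y` and `x + y` are each injective. -/
def Generic (x y : ι → ℝ) : Prop :=
  ∀ i j, i ≠ j → x i ≠ x j ∧ y i ≠ y j ∧ x i + y i ≠ x j + y j

theorem not_theta_NE (hj : NE x y i j) (hk : NE x y i k) (h : x k + y k < x j + y j) :
    ¬ Theta x y i j := fun ht => by
  have := ht.2 k hk.ne.symm ((sameCone_NE hj).2 hk)
  rw [hexDist_NE hj, hexDist_NE hk] at this
  linarith

theorem not_theta_SW (g : Generic x y) (hj : NE x y j i) (hk : NE x y k i)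
    (h : x j + y j < x k + y k) : ¬ Theta x y i j := fun ht => by
  have hg := g k i hk.ne
  have := ht.2 k hk.ne ((sameCone_NE_rev hj hg.1 hg.2.1).2 hk)
  rw [hexDist_comm, hexDist_NE hj, hexDist_comm, hexDist_NE hk] at this
  linarith

theorem not_theta_SE (g : Generic x y) (hj : SE x y i j) (hk : SE x y i k) (h : x k < x j) :
    ¬ Theta x y i j := fun ht => by
  have := ht.2 k hk.ne.symm ((sameCone_SE hj (g k i hk.ne.symm).2.1).2 hk)
  rw [hexDist_SE hj, hexDist_SE hk] at this
  linarith

theorem not_theta_NW (g : Generic x y) (hj : SE x y j i) (hk : SE x y k i) (h : x j < x k) :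
    ¬ Theta x y i j := fun ht => by
  have hg := g k i hk.ne
  have := ht.2 k hk.ne ((sameCone_SE_rev hj hg.1 hg.2.2).2 hk)
  rw [hexDist_comm, hexDist_SE hj, hexDist_comm, hexDist_SE hk] at this
  linarith

theorem not_thetaTheta_NE (g : Generic x y) (hi : NE x y i j) (hk : NE x y k j)
    (h : x i + y i < x k + y k) (hth : Theta x y k j) : ¬ ThetaTheta x y i j := fun ht => by
  have hg := g k j hk.ne
  have := ht.2 k hth ((sameCone_NE_rev hi hg.1 hg.2.1).2 hk)
  rw [hexDist_NE hi, hexDist_NE hk] at this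
  linarith

theorem not_thetaTheta_SW (hi : NE x y j i) (hk : NE x y j k)
    (h : x k + y k < x i + y i) (hth : Theta x y k j) : ¬ ThetaTheta x y i j := fun ht => by
  have := ht.2 k hth ((sameCone_NE hi).2 hk)
  rw [hexDist_comm, hexDist_NE hi, hexDist_comm, hexDist_NE hk] at this
  linarith

theorem not_thetaTheta_SE (g : Generic x y) (hi : SE x y i j) (hk : SE x y k j)
    (h : x i < x k) (hth : Theta x y k j) : ¬ ThetaTheta x y i j := fun ht => by
  have hg := g k j hk.ne
  have := ht.2 k hth ((sameCone_SE_rev hi hg.1 hg.2.2).2 hk)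
  rw [hexDist_SE hi, hexDist_SE hk] at this
  linarith

theorem not_thetaTheta_NW (g : Generic x y) (hi : SE x y j i) (hk : SE x y j k)
    (h : x k < x i) (hth : Theta x y k j) : ¬ ThetaTheta x y i j := fun ht => by
  have := ht.2 k hth ((sameCone_SE hi (g k j hk.ne.symm).2.1).2 hk)
  rw [hexDist_comm, hexDist_SE hi, hexDist_comm, hexDist_SE hk] at this
  linarith

theorem theta_NE (hj : NE x y i j) (h : ∀ k, NE x y i k → x j + y j ≤ x k + y k) :
    Theta x y i j := by
  refine ⟨hj.ne, fun k _ hs => ?_⟩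
  have hk := (sameCone_NE hj).1 hs
  rw [hexDist_NE hj, hexDist_NE hk]
  linarith [h k hk]

theorem theta_SW (g : Generic x y) (hj : NE x y j i)
    (h : ∀ k, NE x y k i → x k + y k ≤ x j + y j) : Theta x y i j := by
  refine ⟨hj.ne.symm, fun k hki hs => ?_⟩
  have hg := g k i hki
  have hk := (sameCone_NE_rev hj hg.1 hg.2.1).1 hs
  rw [hexDist_comm, hexDist_NE hj, hexDist_comm, hexDist_NE hk]
  linarith [h k hk]

theorem theta_SE (g : Generic x y) (hj : SE x y i j) (h : ∀ k, SE x y i k → x j ≤ x k) :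
    Theta x y i j := by
  refine ⟨hj.ne, fun k hki hs => ?_⟩
  have hk := (sameCone_SE hj (g k i hki).2.1).1 hs
  rw [hexDist_SE hj, hexDist_SE hk]
  linarith [h k hk]

theorem theta_NW (g : Generic x y) (hj : SE x y j i) (h : ∀ k, SE x y k i → x k ≤ x j) :
    Theta x y i j := by
  refine ⟨hj.ne.symm, fun k hki hs => ?_⟩
  have hg := g k i hki
  have hk := (sameCone_SE_rev hj hg.1 hg.2.2).1 hs
  rw [hexDist_comm, hexDist_SE hj, hexDist_comm, hexDist_SE hk]
  linarith [h k hk]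

end edges


/-! ### Configurations and their doubling -/

/-- Index set of the doubled configuration: two copies of `ι` and two extra points. -/
inductive Doubled (ι : Type)
  | low (i : ι)
  | high (i : ι)
  | b₁
  | b₂

instance [Finite ι] : Finite (Doubled ι) :=
  Finite.of_surjective
    (fun t : ι ⊕ ι ⊕ Bool => match t with
      | .inl i => Doubled.low i
      | .inr (.inl i) => Doubled.high i
      | .inr (.inr false) => Doubled.b₁
      | .inr (.inr true) => Doubled.b₂)
    (fun e => match e with
      | .low i => ⟨.inl i, rfl⟩
      | .high i => ⟨.inr (.inl i), rfl⟩
      | .b₁ => ⟨.inr (.inr false), rfl⟩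
      | .b₂ => ⟨.inr (.inr true), rfl⟩)

/-- A finite point set in oblique coordinates with a corner point `P` minimal in `x` and `y`, a
corner point `Q` maximal in `x` and `y`, and a potential `φ` that changes along each edge of `ΘΘ₆` by
at most the length of the edge. (Finiteness is asked for separately.) -/
structure Config (ι : Type) where
  x : ι → ℝ
  y : ι → ℝ
  φ : ι → ℝ
  P : ι
  Q : ι
  hPQ : P ≠ Q
  gen : Generic x y
  hP : ∀ i, i ≠ P → NE x y P i
  hQ : ∀ i, i ≠ Q → NE x y i Q
  lip : ∀ i j, ThetaTheta x y i j → |φ i - φ j| ≤ eucl x y i j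

namespace Config

/-- The extent in the `x` coordinate. -/
def W (C : Config ι) : ℝ := C.x C.Q - C.x C.P

/-- The extent in the `y` coordinate. -/
def H (C : Config ι) : ℝ := C.y C.Q - C.y C.P

/-- The `x` coordinates of the doubled configuration. The shift `W + H + 4ε` puts the values of `x`
and of `x + y` into the order first copy, `b₁`, `b₂`, second copy; see `order_x` and `order_s`. -/
def ex (C : Config ι) (ε : ℝ) : Doubled ι → ℝ
  | .low i => C.x i
  | .high i => C.x i + (C.W + C.H + 4 * ε)
  | .b₁ => C.x C.Q + 2 * ε
  | .b₂ => C.x C.P + (C.W + C.H + 4 * ε) - 2 * ε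

/-- The `y` coordinates of the doubled configuration; up to the small `ε` the copies lie at equal
height. -/
def ey (C : Config ι) (ε : ℝ) : Doubled ι → ℝ
  | .low i => C.y i
  | .high i => C.y i + ε
  | .b₁ => C.y C.Q - ε
  | .b₂ => C.y C.P + 2 * ε

/-- The potential of the doubled configuration: it rises by `H / 4` from `b₁` to `b₂`, and continues
the potentials of the two copies. -/
def eφ (C : Config ι) : Doubled ι → ℝ
  | .low i => C.φ i
  | .high i => C.φ i - C.φ C.P + C.φ C.Q + C.H / 4
  | .b₁ => C.φ C.Q
  | .b₂ => C.φ C.Q + C.H / 4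

/-- The smallness of the shift `ε` compared to the differences of the `y` coordinates which the
doubling needs. -/
structure Small (C : Config ι) (ε : ℝ) : Prop where
  pos : 0 < ε
  low : ∀ i, i ≠ C.P → C.y C.P + 4 * ε < C.y i
  high : ∀ i, i ≠ C.Q → C.y i + 4 * ε < C.y C.Q
  gap : ∀ i j, i ≠ j → ε < |C.y i - C.y j|

theorem bounds (C : Config ι) (i : ι) :
    C.x C.P ≤ C.x i ∧ C.x i ≤ C.x C.Q ∧ C.y C.P ≤ C.y i ∧ C.y i ≤ C.y C.Q := by
  refine ⟨?_, ?_, ?_, ?_⟩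
  · by_cases h : i = C.P
    · rw [h]
    · exact (C.hP i h).1.le
  · by_cases h : i = C.Q
    · rw [h]
    · exact (C.hQ i h).1.le
  · by_cases h : i = C.P
    · rw [h]
    · exact (C.hP i h).2.le
  · by_cases h : i = C.Q
    · rw [h]
    · exact (C.hQ i h).2.le

theorem W_pos (C : Config ι) : 0 < C.W := sub_pos.2 (C.hP C.Q C.hPQ.symm).1

theorem H_pos (C : Config ι) : 0 < C.H := sub_pos.2 (C.hP C.Q C.hPQ.symm).2

theorem Small.H_gt {C : Config ι} {ε : ℝ} (hε : C.Small ε) : 4 * ε < C.H := by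
  have := hε.low C.Q C.hPQ.symm
  unfold H; linarith

theorem order_x (C : Config ι) {ε : ℝ} (hε : C.Small ε) (i j : ι) :
    C.ex ε (.low i) < C.ex ε .b₁ ∧ C.ex ε .b₁ < C.ex ε .b₂ ∧ C.ex ε .b₂ < C.ex ε (.high j) := by
  have hp := hε.pos
  have hH := hε.H_gt
  have hi := C.bounds i
  have hj := C.bounds j
  simp only [ex, W, H] at *
  refine ⟨?_, ?_, ?_⟩ <;> linarith

theorem order_s (C : Config ι) {ε : ℝ} (hε : C.Small ε) (i j : ι) :
    C.ex ε (.low i) + C.ey ε (.low i) < C.ex ε .b₁ + C.ey ε .b₁ ∧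
      C.ex ε .b₁ + C.ey ε .b₁ < C.ex ε .b₂ + C.ey ε .b₂ ∧
      C.ex ε .b₂ + C.ey ε .b₂ < C.ex ε (.high j) + C.ey ε (.high j) := by
  have hp := hε.pos
  have hH := hε.H_gt
  have hi := C.bounds i
  have hj := C.bounds j
  simp only [ex, ey, W, H] at *
  refine ⟨?_, ?_, ?_⟩ <;> linarith

theorem doubled_generic (C : Config ι) {ε : ℝ} (hε : C.Small ε) :
    Generic (C.ex ε) (C.ey ε) := by
  have hp := hε.pos
  have hH := hε.H_gt
  have key : ∀ i j, C.y i ≠ C.y j + ε := by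
    intro i j h
    by_cases hij : i = j
    · subst hij; linarith
    · have := hε.gap i j hij
      rw [h, add_sub_cancel_left, abs_of_pos hp] at this
      linarith
  have k1 : ∀ i, C.y i ≠ C.y C.Q - ε ∧ C.y i + ε ≠ C.y C.Q - ε := by
    intro i
    by_cases h : i = C.Q
    · subst h; constructor <;> intro <;> linarith
    · have := hε.high i h; constructor <;> intro <;> linarith
  have k2 : ∀ i, C.y i ≠ C.y C.P + 2 * ε ∧ C.y i + ε ≠ C.y C.P + 2 * ε := by
    intro i
    by_cases h : i = C.P
    · subst h; constructor <;> intro <;> linarith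
    · have := hε.low i h; constructor <;> intro <;> linarith
  have k3 : C.y C.Q - ε ≠ C.y C.P + 2 * ε := by
    intro; unfold H at hH; linarith
  have hx := C.order_x hε
  have hs := C.order_s hε
  intro i j hij
  rcases i with i | i | _ | _ <;> rcases j with j | j | _ | _ <;>
    first | exact absurd rfl hij | skip
  · exact C.gen i j (by rintro rfl; exact hij rfl)
  · have a := hx i j; have b := hs i j
    exact ⟨by linarith, key _ _, by linarith⟩
  · have a := hx i i; have b := hs i i
    exact ⟨by linarith, (k1 _).1, by linarith⟩
  · have a := hx i i; have b := hs i i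
    exact ⟨by linarith, (k2 _).1, by linarith⟩
  · have a := hx j i; have b := hs j i
    exact ⟨by linarith, (key _ _).symm, by linarith⟩
  · have := C.gen i j (by rintro rfl; exact hij rfl)
    simp only [ex, ey]
    exact ⟨by simpa using this.1, by simpa using this.2.1, fun h => this.2.2 (by linarith)⟩
  · have a := hx i i; have b := hs i i
    exact ⟨by linarith, (k1 _).2, by linarith⟩
  · have a := hx i i; have b := hs i i
    exact ⟨by linarith, (k2 _).2, by linarith⟩
  · have a := hx j j; have b := hs j j
    exact ⟨by linarith, (k1 _).1.symm, by linarith⟩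
  · have a := hx j j; have b := hs j j
    exact ⟨by linarith, (k1 _).2.symm, by linarith⟩
  · have a := hx C.P C.P; have b := hs C.P C.P
    exact ⟨by linarith, k3, by linarith⟩
  · have a := hx j j; have b := hs j j
    exact ⟨by linarith, (k2 _).1.symm, by linarith⟩
  · have a := hx j j; have b := hs j j
    exact ⟨by linarith, (k2 _).2.symm, by linarith⟩
  · have a := hx C.P C.P; have b := hs C.P C.P
    exact ⟨by linarith, k3.symm, by linarith⟩

end Config

/-! ### Edges inside the two copies -/

/-- A point `e` which is larger in `x` and `x + y` than `i` and `j` never blocks the edge from `i` to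
`j`. The first copy is not influenced by the rest of the doubled configuration for this reason. -/
theorem hexDist_le_of_above {x y : ι → ℝ} (g : Generic x y) {i j e : ι} (hij : i ≠ j)
    (hix : x i < x e) (his : x i + y i < x e + y e) (hjx : x j < x e)
    (hjs : x j + y j < x e + y e) (hs : SameCone x y i j e) :
    hexDist x y i j ≤ hexDist x y i e := by
  have h1 := hs.1.2 hix
  have h3 := hs.2.2.2 his
  rcases lt_or_gt_of_ne (g i j hij).2.1 with h | h
  · rw [hexDist_NE ⟨h1, h⟩, hexDist_NE ((sameCone_NE ⟨h1, h⟩).1 hs)]; linarith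
  · have hei : e ≠ i := by rintro rfl; exact lt_irrefl _ hix
    rw [hexDist_SE ⟨h1, h, h3⟩, hexDist_SE ((sameCone_SE ⟨h1, h, h3⟩ (g e i hei).2.1).1 hs)]
    linarith

/-- The mirror image of `hexDist_le_of_above`, for the second copy. -/
theorem hexDist_le_of_below {x y : ι → ℝ} (g : Generic x y) {i j e : ι} (hij : i ≠ j)
    (hix : x e < x i) (his : x e + y e < x i + y i) (hjx : x e < x j)
    (hjs : x e + y e < x j + y j) (hs : SameCone x y i j e) :
    hexDist x y i j ≤ hexDist x y i e := by
  have hg := g i j hij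
  have h1 : x j < x i := lt_of_le_of_ne
    (not_lt.1 fun h => by linarith [hs.1.1 h]) hg.1.symm
  have h3 : x j + y j < x i + y i := lt_of_le_of_ne
    (not_lt.1 fun h => by linarith [hs.2.2.1 h]) hg.2.2.symm
  have hei : e ≠ i := by rintro rfl; exact lt_irrefl _ hix
  have he := g e i hei
  rw [hexDist_comm, hexDist_comm x y i e]
  rcases lt_or_gt_of_ne hg.2.1 with h | h
  · rw [hexDist_SE ⟨h1, h, h3⟩, hexDist_SE ((sameCone_SE_rev ⟨h1, h, h3⟩ he.1 he.2.2).1 hs)]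
    linarith
  · rw [hexDist_NE ⟨h1, h⟩, hexDist_NE ((sameCone_NE_rev ⟨h1, h⟩ he.1 he.2.1).1 hs)]; linarith

namespace Config
open Doubled

theorem sameCone_low (C : Config ι) (ε : ℝ) (i j k : ι) :
    SameCone (C.ex ε) (C.ey ε) (low i) (low j) (low k) ↔ SameCone C.x C.y i j k := Iff.rfl

theorem sameCone_high (C : Config ι) (ε : ℝ) (i j k : ι) :
    SameCone (C.ex ε) (C.ey ε) (high i) (high j) (high k) ↔ SameCone C.x C.y i j k := by
  simp only [SameCone, ex, ey, add_add_add_comm _ (C.W + C.H + 4 * ε), add_lt_add_iff_right]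

theorem hexDist_high (C : Config ι) (ε : ℝ) (i j : ι) :
    hexDist (C.ex ε) (C.ey ε) (high i) (high j) = hexDist C.x C.y i j := by
  simp only [hexDist, ex, ey, add_add_add_comm _ (C.W + C.H + 4 * ε), add_sub_add_right_eq_sub]

theorem theta_low (C : Config ι) {ε : ℝ} (hε : C.Small ε) (i j : ι) :
    Theta (C.ex ε) (C.ey ε) (low i) (low j) ↔ Theta C.x C.y i j := by
  constructor
  · exact fun h => ⟨fun e => h.1 (congrArg _ e), fun k hk hs =>
      h.2 (low k) (fun e => hk (by injection e)) hs⟩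
  · refine fun h => ⟨fun e => h.1 (by injection e), fun k hk hs => ?_⟩
    have hij : (low i : Doubled ι) ≠ low j := fun e => h.1 (by injection e)
    have g := C.doubled_generic hε
    rcases k with k | k | _ | _
    · exact h.2 k (fun e => hk (congrArg _ e)) hs
    · have a := C.order_x hε i k; have b := C.order_s hε i k
      have a' := C.order_x hε j k; have b' := C.order_s hε j k
      exact hexDist_le_of_above g hij (by linarith) (by linarith) (by linarith) (by linarith) hs
    · exact hexDist_le_of_above g hij (C.order_x hε i i).1 (C.order_s hε i i).1
        (C.order_x hε j i).1 (C.order_s hε j i).1 hs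
    · have a := C.order_x hε i i; have b := C.order_s hε i i
      have a' := C.order_x hε j i; have b' := C.order_s hε j i
      exact hexDist_le_of_above g hij (by linarith) (by linarith) (by linarith) (by linarith) hs

theorem theta_high (C : Config ι) {ε : ℝ} (hε : C.Small ε) (i j : ι) :
    Theta (C.ex ε) (C.ey ε) (high i) (high j) ↔ Theta C.x C.y i j := by
  constructor
  · intro h
    refine ⟨fun e => h.1 (congrArg _ e), fun k hk hs => ?_⟩
    have := h.2 (high k) (fun e => hk (by injection e)) ((C.sameCone_high ε i j k).2 hs)
    rwa [hexDist_high, hexDist_high] at this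
  · refine fun h => ⟨fun e => h.1 (by injection e), fun k hk hs => ?_⟩
    have hij : (high i : Doubled ι) ≠ high j := fun e => h.1 (by injection e)
    have g := C.doubled_generic hε
    rcases k with k | k | _ | _
    · have a := C.order_x hε k i; have b := C.order_s hε k i
      have a' := C.order_x hε k j; have b' := C.order_s hε k j
      exact hexDist_le_of_below g hij (by linarith) (by linarith) (by linarith) (by linarith) hs
    · rw [hexDist_high, hexDist_high]
      exact h.2 k (fun e => hk (congrArg _ e)) ((C.sameCone_high ε i j k).1 hs)
    · have a := C.order_x hε i i; have b := C.order_s hε i i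
      have a' := C.order_x hε j j; have b' := C.order_s hε j j
      exact hexDist_le_of_below g hij (by linarith) (by linarith) (by linarith) (by linarith) hs
    · exact hexDist_le_of_below g hij (C.order_x hε i i).2.2 (C.order_s hε i i).2.2
        (C.order_x hε i j).2.2 (C.order_s hε i j).2.2 hs

theorem thetaTheta_low (C : Config ι) {ε : ℝ} (hε : C.Small ε) {i j : ι}
    (h : ThetaTheta (C.ex ε) (C.ey ε) (low i) (low j)) : ThetaTheta C.x C.y i j :=
  ⟨(C.theta_low hε i j).1 h.1, fun k hk hs => h.2 (low k) ((C.theta_low hε k j).2 hk) hs⟩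

theorem thetaTheta_high (C : Config ι) {ε : ℝ} (hε : C.Small ε) {i j : ι}
    (h : ThetaTheta (C.ex ε) (C.ey ε) (high i) (high j)) : ThetaTheta C.x C.y i j := by
  refine ⟨(C.theta_high hε i j).1 h.1, fun k hk hs => ?_⟩
  have := h.2 (high k) ((C.theta_high hε k j).2 hk) ((C.sameCone_high ε j i k).2 hs)
  rwa [hexDist_high, hexDist_high] at this


/-! ### Edges between the copies -/

/-- The point other than `Q` with the largest `x + y`; it and `Q` are joined by `Θ₆`-edges in both
directions. -/
theorem exists_q [Finite ι] (C : Config ι) :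
    ∃ q, q ≠ C.Q ∧ ∀ i, i ≠ C.Q → C.x i + C.y i ≤ C.x q + C.y q := by
  have : Nonempty {i // i ≠ C.Q} := ⟨⟨C.P, C.hPQ⟩⟩
  obtain ⟨q, hq⟩ := Finite.exists_max fun i : {i // i ≠ C.Q} => C.x i + C.y i
  exact ⟨q, q.2, fun i hi => hq ⟨i, hi⟩⟩

/-- The point other than `P` with the smallest `x + y`; it and `P` are joined by `Θ₆`-edges in both
directions. -/
theorem exists_p [Finite ι] (C : Config ι) :
    ∃ p, p ≠ C.P ∧ ∀ i, i ≠ C.P → C.x p + C.y p ≤ C.x i + C.y i := by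
  have : Nonempty {i // i ≠ C.P} := ⟨⟨C.Q, C.hPQ.symm⟩⟩
  obtain ⟨p, hp⟩ := Finite.exists_min fun i : {i // i ≠ C.P} => C.x i + C.y i
  exact ⟨p, p.2, fun i hi => hp ⟨i, hi⟩⟩

section forced
variable (C : Config ι) {ε : ℝ}

theorem theta_Qq {q : ι} (hq : q ≠ C.Q) (hm : ∀ i, i ≠ C.Q → C.x i + C.y i ≤ C.x q + C.y q) :
    Theta C.x C.y C.Q q :=
  theta_SW C.gen (C.hQ q hq) fun k hk => hm k hk.ne

theorem theta_qQ {q : ι} (hq : q ≠ C.Q) (hm : ∀ i, i ≠ C.Q → C.x i + C.y i ≤ C.x q + C.y q) :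
    Theta C.x C.y q C.Q := by
  refine theta_NE (C.hQ q hq) fun k hk => ?_
  by_cases h : k = C.Q
  · rw [h]
  · linarith [hm k h, hk.1, hk.2]

theorem theta_Pp {p : ι} (hp : p ≠ C.P) (hm : ∀ i, i ≠ C.P → C.x p + C.y p ≤ C.x i + C.y i) :
    Theta C.x C.y C.P p :=
  theta_NE (C.hP p hp) fun k hk => hm k hk.ne.symm

theorem theta_pP {p : ι} (hp : p ≠ C.P) (hm : ∀ i, i ≠ C.P → C.x p + C.y p ≤ C.x i + C.y i) :
    Theta C.x C.y p C.P := by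
  refine theta_SW C.gen (C.hP p hp) fun k hk => ?_
  by_cases h : k = C.P
  · rw [h]
  · linarith [hm k h, hk.1, hk.2]

theorem SE_b (hε : C.Small ε) : SE (C.ex ε) (C.ey ε) b₁ b₂ := by
  refine ⟨(C.order_x hε C.P C.P).2.1, ?_, (C.order_s hε C.P C.P).2.1⟩
  have := hε.H_gt
  have := hε.pos
  simp only [ey, H] at *
  linarith

theorem theta_b₁b₂ (hε : C.Small ε) : Theta (C.ex ε) (C.ey ε) b₁ b₂ := by
  refine theta_SE (C.doubled_generic hε) (C.SE_b hε) fun k hk => ?_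
  rcases k with k | k | _ | _
  · linarith [hk.1, (C.order_x hε k k).1]
  · exact (C.order_x hε k k).2.2.le
  · exact absurd hk.1 (lt_irrefl _)
  · exact le_rfl

theorem theta_b₂b₁ (hε : C.Small ε) : Theta (C.ex ε) (C.ey ε) b₂ b₁ := by
  refine theta_NW (C.doubled_generic hε) (C.SE_b hε) fun k hk => ?_
  rcases k with k | k | _ | _
  · exact (C.order_x hε k k).1.le
  · linarith [hk.1, (C.order_x hε k k).2.2]
  · exact le_rfl
  · exact absurd hk.1 (lt_irrefl _)

end forced

section dead
variable (C : Config ι) {ε : ℝ}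

/-- The first copy is joined to `b₁` only at `Q`, which blocks all other points. -/
theorem edge_low_b₁ (hε : C.Small ε) (i : ι) (h : ThetaTheta (C.ex ε) (C.ey ε) (low i) b₁) :
    i = C.Q := by
  by_contra hi
  have hp := hε.pos
  have ox := C.order_x hε
  have os := C.order_s hε
  refine not_theta_NE (y := C.ey ε) (k := low C.Q) ⟨(ox i i).1, ?_⟩ (C.hQ i hi) (os C.Q C.Q).1 h.1
  have := hε.high i hi
  simp only [ey]; linarith

/-- The second copy is joined to `b₂` only at `P`, which blocks all other points. -/
theorem edge_high_b₂ (hε : C.Small ε) (i : ι) (h : ThetaTheta (C.ex ε) (C.ey ε) (high i) b₂) :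
    i = C.P := by
  by_contra hi
  have hp := hε.pos
  have ox := C.order_x hε
  have os := C.order_s hε
  have hPi := C.hP i hi
  refine not_theta_SW (C.doubled_generic hε) (k := high C.P) ⟨(ox i i).2.2, ?_⟩ ?_
    (os C.P C.P).2.2 h.1
  · have := hε.low i hi
    simp only [ey]; linarith
  · exact ⟨add_lt_add_left hPi.1 _, add_lt_add_left hPi.2 _⟩

/-- From `P` the edge is blocked by `Q`, from `Q` by `b₁`; from the other points it loses against the
incoming edge `b₁ → b₂`. -/
theorem edge_low_b₂ (hε : C.Small ε) (i : ι) :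
    ¬ ThetaTheta (C.ex ε) (C.ey ε) (low i) b₂ := by
  intro h
  have hp := hε.pos
  have ox := C.order_x hε
  have os := C.order_s hε
  have g := C.doubled_generic hε
  have hx : C.ex ε (low i) < C.ex ε b₂ := by linarith [ox i i]
  have hs : C.ex ε (low i) + C.ey ε (low i) < C.ex ε b₂ + C.ey ε b₂ := by linarith [os i i]
  by_cases hP : i = C.P
  · subst hP
    refine not_theta_NE (y := C.ey ε) (k := low C.Q) ⟨hx, ?_⟩ (C.hQ _ C.hPQ) ?_ h.1
    · simp only [ey]; linarith
    · linarith [os C.Q C.Q]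
  have hSE : SE (C.ex ε) (C.ey ε) (low i) b₂ := by
    refine ⟨hx, ?_, hs⟩
    have := hε.low i hP
    simp only [ey]; linarith
  by_cases hQ : i = C.Q
  · subst hQ
    refine not_theta_SE (k := b₁) g hSE ⟨(ox _ C.P).1, ?_, (os _ C.P).1⟩ (ox C.P C.P).2.1 h.1
    simp only [ey]; linarith
  · exact not_thetaTheta_SE (k := b₁) g hSE (C.SE_b hε) (ox i i).1 (C.theta_b₁b₂ hε) h

/-- From `Q` the edge is blocked by `P`, from `P` by `b₂`; from the other points it loses against the
incoming edge `b₂ → b₁`. -/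
theorem edge_high_b₁ (hε : C.Small ε) (i : ι) :
    ¬ ThetaTheta (C.ex ε) (C.ey ε) (high i) b₁ := by
  intro h
  have hp := hε.pos
  have ox := C.order_x hε
  have os := C.order_s hε
  have g := C.doubled_generic hε
  have hx : C.ex ε b₁ < C.ex ε (high i) := by linarith [ox i i]
  have hs : C.ex ε b₁ + C.ey ε b₁ < C.ex ε (high i) + C.ey ε (high i) := by linarith [os i i]
  by_cases hQ : i = C.Q
  · subst hQ
    have hPQ := C.hQ _ C.hPQ
    refine not_theta_SW (k := high C.P) g ⟨hx, ?_⟩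
      ⟨add_lt_add_left hPQ.1 _, add_lt_add_left hPQ.2 _⟩ ?_ h.1
    · simp only [ey]; linarith
    · linarith [os C.P C.P]
  have hSE : SE (C.ex ε) (C.ey ε) b₁ (high i) := by
    refine ⟨hx, ?_, hs⟩
    have := hε.high i hQ
    simp only [ey]; linarith
  by_cases hP : i = C.P
  · subst hP
    refine not_theta_NW (k := b₂) g hSE ⟨(ox C.P _).2.2, ?_, (os C.P _).2.2⟩ (ox C.P C.P).2.1 h.1
    simp only [ey]; linarith
  · exact not_thetaTheta_NW (k := b₂) g hSE (C.SE_b hε) (ox i i).2.2 (C.theta_b₂b₁ hε) h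

variable [Finite ι]

/-- An ascending edge is blocked by the lower `Q`, or starts there and loses against an edge inside the
upper copy; a descending edge is blocked by `b₂`. -/
theorem edge_low_high (hε : C.Small ε) (i j : ι) :
    ¬ ThetaTheta (C.ex ε) (C.ey ε) (low i) (high j) := by
  intro h
  have hp := hε.pos
  have ox := C.order_x hε
  have os := C.order_s hε
  have g := C.doubled_generic hε
  have hx : C.ex ε (low i) < C.ex ε (high j) := by linarith [ox i j]
  have hs : C.ex ε (low i) + C.ey ε (low i) < C.ex ε (high j) + C.ey ε (high j) := by
    linarith [os i j]
  rcases lt_or_gt_of_ne (g _ _ h.1.1).2.1 with hy | hy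
  · by_cases hQ : i = C.Q
    · subst hQ
      have hj : j = C.Q := by
        by_contra hj
        have := hε.high j hj
        simp only [ey] at hy; linarith
      subst hj
      obtain ⟨q, hq, hm⟩ := C.exists_q
      have hqQ := C.hQ q hq
      refine not_thetaTheta_NE (k := high q) g ⟨hx, hy⟩
        ⟨add_lt_add_left hqQ.1 _, add_lt_add_left hqQ.2 _⟩ ?_
        ((C.theta_high hε _ _).2 (C.theta_qQ hq hm)) h
      linarith [os C.Q q]
    · refine not_theta_NE (k := low C.Q) ⟨hx, hy⟩ (C.hQ i hQ) ?_ h.1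
      linarith [os C.Q j]
  · have hP : i ≠ C.P := by
      rintro rfl
      have := C.bounds j
      simp only [ey] at hy; linarith
    refine not_theta_SE (k := b₂) g ⟨hx, hy, hs⟩ ⟨?_, ?_, ?_⟩ (ox i j).2.2 h.1
    · linarith [ox i i]
    · have := hε.low i hP
      simp only [ey]; linarith
    · linarith [os i i]

/-- A descending edge is blocked by the upper `P`, or starts there and loses against an edge inside the
lower copy; an ascending edge is blocked by `b₁`. -/
theorem edge_high_low (hε : C.Small ε) (i j : ι) :
    ¬ ThetaTheta (C.ex ε) (C.ey ε) (high i) (low j) := by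
  intro h
  have hp := hε.pos
  have ox := C.order_x hε
  have os := C.order_s hε
  have g := C.doubled_generic hε
  have hx : C.ex ε (low j) < C.ex ε (high i) := by linarith [ox j i]
  have hs : C.ex ε (low j) + C.ey ε (low j) < C.ex ε (high i) + C.ey ε (high i) := by
    linarith [os j i]
  rcases lt_or_gt_of_ne (g _ _ h.1.1).2.1 with hy | hy
  · have hQ : i ≠ C.Q := by
      rintro rfl
      have := C.bounds j
      simp only [ey] at hy; linarith
    refine not_theta_NW (k := b₁) g ⟨hx, hy, hs⟩ ⟨?_, ?_, ?_⟩ (ox j i).1 h.1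
    · linarith [ox i i]
    · have := hε.high i hQ
      simp only [ey]; linarith
    · linarith [os i i]
  · by_cases hP : i = C.P
    · subst hP
      have hj : j = C.P := by
        by_contra hj
        have := hε.low j hj
        simp only [ey] at hy; linarith
      subst hj
      obtain ⟨p, hp, hm⟩ := C.exists_p
      refine not_thetaTheta_SW (k := low p) ⟨hx, hy⟩ (C.hP p hp) ?_
        ((C.theta_low hε _ _).2 (C.theta_pP hp hm)) h
      linarith [os p C.P]
    · have hPi := C.hP i hP
      refine not_theta_SW (k := high C.P) g ⟨hx, hy⟩
        ⟨add_lt_add_left hPi.1 _, add_lt_add_left hPi.2 _⟩ ?_ h.1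
      linarith [os j C.P]

/-- Of the points other than `Q`, only the one with the largest `x + y` receives a `Θ₆`-edge from `b₁`,
and it prefers the incoming edge from `Q`. -/
theorem edge_b₁_low (hε : C.Small ε) (i : ι) (h : ThetaTheta (C.ex ε) (C.ey ε) b₁ (low i)) :
    i = C.Q := by
  by_contra hi
  have hp := hε.pos
  have ox := C.order_x hε
  have os := C.order_s hε
  have g := C.doubled_generic hε
  obtain ⟨q, hq, hm⟩ := C.exists_q
  have hNE : ∀ k, k ≠ C.Q → NE (C.ex ε) (C.ey ε) (low k) b₁ := by
    refine fun k hk => ⟨(ox k k).1, ?_⟩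
    have := hε.high k hk
    simp only [ey]; linarith
  by_cases hiq : i = q
  · subst hiq
    exact not_thetaTheta_SW (k := low C.Q) (hNE i hi) (C.hQ i hi) (os C.Q C.Q).1
      ((C.theta_low hε _ _).2 (C.theta_Qq hi hm)) h
  · exact not_theta_SW (k := low q) g (hNE i hi) (hNE q hq)
      (lt_of_le_of_ne (hm i hi) (C.gen i q hiq).2.2) h.1

/-- Of the points other than `P`, only the one with the smallest `x + y` receives a `Θ₆`-edge from `b₂`,
and it prefers the incoming edge from `P`. -/
theorem edge_b₂_high (hε : C.Small ε) (i : ι) (h : ThetaTheta (C.ex ε) (C.ey ε) b₂ (high i)) :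
    i = C.P := by
  by_contra hi
  have hp := hε.pos
  have ox := C.order_x hε
  have os := C.order_s hε
  have g := C.doubled_generic hε
  obtain ⟨p, hp, hm⟩ := C.exists_p
  have hNE : ∀ k, k ≠ C.P → NE (C.ex ε) (C.ey ε) b₂ (high k) := by
    refine fun k hk => ⟨(ox k k).2.2, ?_⟩
    have := hε.low k hk
    simp only [ey]; linarith
  have hPi := C.hP i hi
  by_cases hip : i = p
  · subst hip
    exact not_thetaTheta_NE (k := high C.P) g (hNE i hi)
      ⟨add_lt_add_left hPi.1 _, add_lt_add_left hPi.2 _⟩ (os C.P C.P).2.2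
      ((C.theta_high hε _ _).2 (C.theta_Pp hi hm)) h
  · refine not_theta_NE (k := high p) (hNE i hi) (hNE p hp) ?_ h.1
    have := lt_of_le_of_ne (hm i hi) (C.gen p i (Ne.symm hip)).2.2
    simp only [ex, ey]; linarith

theorem edge_b₂_low (hε : C.Small ε) (i : ι) :
    ¬ ThetaTheta (C.ex ε) (C.ey ε) b₂ (low i) := by
  intro h
  have hp := hε.pos
  have ox := C.order_x hε
  have os := C.order_s hε
  have g := C.doubled_generic hε
  have hx : C.ex ε (low i) < C.ex ε b₂ := by linarith [ox i i]
  have hs : C.ex ε (low i) + C.ey ε (low i) < C.ex ε b₂ + C.ey ε b₂ := by linarith [os i i]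
  by_cases hP : i = C.P
  · subst hP
    obtain ⟨p, hpP, hm⟩ := C.exists_p
    refine not_thetaTheta_SW (y := C.ey ε) (k := low p) ⟨hx, ?_⟩ (C.hP p hpP) ?_
      ((C.theta_low hε _ _).2 (C.theta_pP hpP hm)) h
    · simp only [ey]; linarith
    · linarith [os p p]
  · refine not_theta_NW (k := b₁) g ⟨hx, ?_, hs⟩ (C.SE_b hε) (ox i i).1 h.1
    have := hε.low i hP
    simp only [ey]; linarith

theorem edge_b₁_high (hε : C.Small ε) (i : ι) :
    ¬ ThetaTheta (C.ex ε) (C.ey ε) b₁ (high i) := by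
  intro h
  have hp := hε.pos
  have ox := C.order_x hε
  have os := C.order_s hε
  have g := C.doubled_generic hε
  have hx : C.ex ε b₁ < C.ex ε (high i) := by linarith [ox i i]
  have hs : C.ex ε b₁ + C.ey ε b₁ < C.ex ε (high i) + C.ey ε (high i) := by linarith [os i i]
  by_cases hQ : i = C.Q
  · subst hQ
    obtain ⟨q, hq, hm⟩ := C.exists_q
    have hqQ := C.hQ q hq
    refine not_thetaTheta_NE (k := high q) g ⟨hx, ?_⟩
      ⟨add_lt_add_left hqQ.1 _, add_lt_add_left hqQ.2 _⟩ ?_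
      ((C.theta_high hε _ _).2 (C.theta_qQ hq hm)) h
    · simp only [ey]; linarith
    · linarith [os q q]
  · refine not_theta_SE (k := b₂) g ⟨hx, ?_, hs⟩ (C.SE_b hε) (ox i i).2.2 h.1
    have := hε.high i hQ
    simp only [ey]; linarith

end dead

/-! ### The doubled configuration and the induction -/

theorem eucl_comm (x y : ι → ℝ) (i j : ι) : eucl x y i j = eucl x y j i := by
  unfold eucl; congr 1; ring

theorem H_le_eucl (C : Config ι) {ε : ℝ} (hε : C.Small ε) :
    C.H / 4 ≤ eucl (C.ex ε) (C.ey ε) b₁ b₂ := by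
  have hH := hε.H_gt
  have hp := hε.pos
  refine Real.le_sqrt_of_sq_le ?_
  have e1 : C.ex ε b₂ - C.ex ε b₁ = C.H := by simp only [ex, W]; ring
  have e2 : C.ey ε b₂ - C.ey ε b₁ = 3 * ε - C.H := by simp only [ey, H]; ring
  rw [e1, e2]
  nlinarith [sq_nonneg (3 * ε - C.H + C.H / 2), C.H_pos]

/-- The doubled configuration, whose corners are the `P` of the first and the `Q` of the second copy. -/
def double [Finite ι] (C : Config ι) {ε : ℝ} (hε : C.Small ε) : Config (Doubled ι) where
  x := C.ex ε
  y := C.ey ε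
  φ := C.eφ
  P := low C.P
  Q := high C.Q
  hPQ := nofun
  gen := C.doubled_generic hε
  hP := by
    have hp := hε.pos
    have ox := C.order_x hε
    rintro (i | i | _ | _) hi
    · exact C.hP i (fun e => hi (congrArg _ e))
    · refine ⟨by linarith [ox C.P i], ?_⟩
      have := C.bounds i
      simp only [ey]; linarith
    · refine ⟨(ox C.P C.P).1, ?_⟩
      have := hε.H_gt
      simp only [ey, H] at *; linarith
    · refine ⟨by linarith [ox C.P C.P], ?_⟩
      simp only [ey]; linarith
  hQ := by
    have hp := hε.pos
    have ox := C.order_x hε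
    rintro (i | i | _ | _) hi
    · refine ⟨by linarith [ox i C.Q], ?_⟩
      have := C.bounds i
      simp only [ey]; linarith
    · have := C.hQ i (fun e => hi (congrArg _ e))
      exact ⟨add_lt_add_left this.1 _, add_lt_add_left this.2 _⟩
    · refine ⟨by linarith [ox C.Q C.Q], ?_⟩
      simp only [ey]; linarith
    · refine ⟨(ox C.Q C.Q).2.2, ?_⟩
      have := hε.H_gt
      simp only [ey, H] at *; linarith
  lip := by
    have hnn : ∀ i j, 0 ≤ eucl (C.ex ε) (C.ey ε) i j := fun i j => Real.sqrt_nonneg _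
    have hb := C.H_le_eucl hε
    have hH := C.H_pos
    rintro (i | i | _ | _) (j | j | _ | _) h
    · exact C.lip i j (C.thetaTheta_low hε h)
    · exact absurd h (C.edge_low_high hε i j)
    · obtain rfl := C.edge_low_b₁ hε i h
      simpa [eφ] using hnn _ _
    · exact absurd h (C.edge_low_b₂ hε i)
    · exact absurd h (C.edge_high_low hε i j)
    · have := C.lip i j (C.thetaTheta_high hε h)
      simpa only [eφ, eucl, ex, ey, add_sub_add_right_eq_sub, sub_sub_sub_cancel_right] using this
    · exact absurd h (C.edge_high_b₁ hε i)
    · obtain rfl := C.edge_high_b₂ hε i h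
      simpa [eφ] using hnn _ _
    · obtain rfl := C.edge_b₁_low hε j h
      simpa [eφ] using hnn _ _
    · exact absurd h (C.edge_b₁_high hε j)
    · exact absurd rfl h.1.1
    · simpa [eφ, abs_of_pos (show 0 < C.H / 4 by linarith)] using hb
    · exact absurd h (C.edge_b₂_low hε j)
    · obtain rfl := C.edge_b₂_high hε j h
      simpa [eφ] using hnn _ _
    · rw [eucl_comm]; simpa [eφ, abs_of_pos (show 0 < C.H / 4 by linarith)] using hb
    · exact absurd rfl h.1.1

theorem sameCone_swap (x y : ι → ℝ) (i j k : ι) : SameCone y x i j k ↔ SameCone x y i j k := by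
  simp only [SameCone, add_comm (y _) (x _)]; tauto

theorem hexDist_swap (x y : ι → ℝ) (i j : ι) : hexDist y x i j = hexDist x y i j := by
  simp only [hexDist, add_comm (y _) (x _), max_left_comm]

theorem theta_swap (x y : ι → ℝ) (i j : ι) : Theta y x i j ↔ Theta x y i j := by
  simp only [Theta, sameCone_swap x y, hexDist_swap x y]

theorem thetaTheta_swap (x y : ι → ℝ) (i j : ι) : ThetaTheta y x i j ↔ ThetaTheta x y i j := by
  simp only [ThetaTheta, theta_swap x y, sameCone_swap x y, hexDist_swap x y]

/-- Reflection exchanging the two oblique coordinates. -/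
def swap (C : Config ι) : Config ι where
  x := C.y
  y := C.x
  φ := C.φ
  P := C.P
  Q := C.Q
  hPQ := C.hPQ
  gen := fun i j h => ⟨(C.gen i j h).2.1, (C.gen i j h).1, fun e => (C.gen i j h).2.2 (by linarith)⟩
  hP := fun i h => ⟨(C.hP i h).2, (C.hP i h).1⟩
  hQ := fun i h => ⟨(C.hQ i h).2, (C.hQ i h).1⟩
  lip := fun i j h => by
    have := C.lip i j ((thetaTheta_swap C.x C.y i j).1 h)
    refine this.trans (le_of_eq ?_)
    unfold eucl; congr 1; ring

theorem exists_small [Finite ι] (C : Config ι) {δ : ℝ} (hδ : 0 < δ) :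
    ∃ ε, C.Small ε ∧ ε ≤ δ := by
  have : Nonempty {p : ι × ι // p.1 ≠ p.2} := ⟨⟨(C.P, C.Q), C.hPQ⟩⟩
  obtain ⟨m, hm⟩ := Finite.exists_min fun p : {p : ι × ι // p.1 ≠ p.2} => |C.y p.1.1 - C.y p.1.2|
  have hm' : ∀ i j, i ≠ j → |C.y m.1.1 - C.y m.1.2| ≤ |C.y i - C.y j| :=
    fun i j h => hm ⟨(i, j), h⟩
  have hpos : 0 < |C.y m.1.1 - C.y m.1.2| := abs_pos.2 (sub_ne_zero.2 (C.gen _ _ m.2).2.1)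
  generalize |C.y m.1.1 - C.y m.1.2| = μ at hm' hpos
  have h1 : min δ (μ / 8) ≤ μ / 8 := min_le_right _ _
  refine ⟨min δ (μ / 8), ⟨lt_min hδ (by linarith), fun i hi => ?_, fun i hi => ?_,
    fun i j hij => ?_⟩, min_le_left _ _⟩
  · have := hm' i C.P hi
    rw [abs_of_pos (sub_pos.2 (C.hP i hi).2)] at this
    linarith
  · have := hm' C.Q i (Ne.symm hi)
    rw [abs_of_pos (sub_pos.2 (C.hQ i hi).2)] at this
    linarith
  · have := hm' i j hij
    linarith

/-- Two points, with potential zero. -/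
def base : Config Bool where
  x b := if b then 1 else 0
  y b := if b then 1 else 0
  φ _ := 0
  P := false
  Q := true
  hPQ := by simp
  gen := by
    rintro (_ | _) (_ | _) h <;> first | exact absurd rfl h | norm_num
  hP := by rintro (_ | _) h <;> simp [NE] at h ⊢
  hQ := by rintro (_ | _) h <;> simp [NE] at h ⊢
  lip i j _ := by
    rw [sub_self, abs_zero]
    exact Real.sqrt_nonneg _

/-- The ratio of the potential difference to the extent is unbounded. -/
theorem exists_config (n : ℕ) : ∃ (ι : Type) (_ : Finite ι) (C : Config ι), C.W ≤ C.H ∧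
    (n / 32 : ℝ) * (C.W + C.H) ≤ C.φ C.Q - C.φ C.P := by
  induction n with
  | zero => exact ⟨Bool, inferInstance, base, by simp [W, H, base], by simp [base]⟩
  | succ n ih =>
    obtain ⟨ι, hι, C, hWH, hφ⟩ := ih
    have hW := C.W_pos
    have hH := C.H_pos
    have hn : (0 : ℝ) ≤ n := n.cast_nonneg
    obtain ⟨ε, hε, hle⟩ := C.exists_small (δ := (C.W + C.H) / (80 * (n + 1))) (by positivity)
    have hp := hε.pos
    have hle' : ε * (80 * (n + 1)) ≤ C.W + C.H := (le_div_iff₀ (by positivity)).1 hle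
    have eW : (C.double hε).W = 2 * C.W + C.H + 4 * ε := by
      simp only [W, double, ex, H]; ring
    have eH : (C.double hε).H = C.H + ε := by
      simp only [double, ey, H]; ring
    refine ⟨Doubled ι, inferInstance, (C.double hε).swap, ?_, ?_⟩
    · change (C.double hε).H ≤ (C.double hε).W
      rw [eW, eH]; linarith
    · change _ * ((C.double hε).H + (C.double hε).W) ≤
        (C.φ C.Q - C.φ C.P + C.φ C.Q + C.H / 4) - C.φ C.P
      rw [eW, eH]
      push_cast
      nlinarith

end Config

/-! ### Cones and projective distance in the complex plane -/

/-- The point `a + b·ω` of the complex plane, `ω = exp(iπ/3)`. -/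
def pt (a b : ℝ) : ℂ := ⟨a + b / 2, √3 / 2 * b⟩

theorem pt_sub (a b c d : ℝ) : pt a b - pt c d = pt (a - c) (b - d) := by
  apply Complex.ext <;> simp [pt] <;> ring

theorem norm_pt (a b : ℝ) : ‖pt a b‖ = √(a ^ 2 + a * b + b ^ 2) := by
  rw [Complex.norm_def, Complex.normSq_apply]
  congr 1
  have h : √3 * √3 = 3 := Real.mul_self_sqrt (by norm_num)
  simp only [pt]
  linear_combination (b ^ 2 / 4) * h

theorem argIn_mem (z : ℂ) : 0 ≤ argIn z ∧ argIn z < 2 * π := by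
  have h1 := Complex.neg_pi_lt_arg z
  have h2 := Complex.arg_le_pi z
  have := Real.pi_pos
  unfold argIn
  split_ifs <;> constructor <;> linarith

theorem re_eq_argIn (z : ℂ) : z.re = ‖z‖ * cos (argIn z) := by
  rw [← Complex.norm_mul_cos_arg z]
  unfold argIn
  split_ifs <;> simp

theorem im_eq_argIn (z : ℂ) : z.im = ‖z‖ * sin (argIn z) := by
  rw [← Complex.norm_mul_sin_arg z]
  unfold argIn
  split_ifs <;> simp

/-- The oblique coordinates in terms of the polar angle. -/
theorem argIn_pt (a b : ℝ) :
    √3 / 2 * b = ‖pt a b‖ * sin (argIn (pt a b)) ∧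
    √3 / 2 * a = -(‖pt a b‖ * sin (argIn (pt a b) - π / 3)) ∧
    √3 / 2 * (a + b) = ‖pt a b‖ * sin (argIn (pt a b) + π / 3) := by
  have h1 : a + b / 2 = _ := re_eq_argIn (pt a b)
  have h2 : √3 / 2 * b = _ := im_eq_argIn (pt a b)
  rw [sin_sub, sin_add, cos_pi_div_three, sin_pi_div_three]
  refine ⟨h2, ?_, ?_⟩
  · linear_combination (√3 / 2) * h1 - (1 / 2) * h2
  · linear_combination (√3 / 2) * h1 + (1 / 2) * h2

theorem floor_argIn (z : ℂ) : ∃ k : ℕ, k < 6 ∧ (⌊argIn z / (π / 3)⌋).toNat = k ∧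
    (k : ℝ) * (π / 3) ≤ argIn z ∧ argIn z < (k + 1 : ℝ) * (π / 3) := by
  obtain ⟨h0, h1⟩ := argIn_mem z
  have hpi : 0 < π / 3 := by positivity
  have hf : 0 ≤ ⌊argIn z / (π / 3)⌋ := Int.floor_nonneg.2 (by positivity)
  have hc : (((⌊argIn z / (π / 3)⌋).toNat : ℕ) : ℝ) = (⌊argIn z / (π / 3)⌋ : ℝ) := by
    exact_mod_cast Int.toNat_of_nonneg hf
  refine ⟨_, ?_, rfl, ?_, ?_⟩
  · zify
    rw [Int.toNat_of_nonneg hf, Int.floor_lt, div_lt_iff₀ hpi]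
    push_cast; linarith
  · rw [hc, ← le_div_iff₀ hpi]; exact Int.floor_le _
  · rw [hc, ← div_lt_iff₀ hpi]; exact Int.lt_floor_add_one _

theorem mem_cone_iff (u v w : ℂ) :
    w ∈ cone (coneIdx u v) u ↔ w ≠ u ∧ coneIdx u w = coneIdx u v := by
  obtain ⟨k, -, hk, h1, h2⟩ := floor_argIn (w - u)
  obtain ⟨l, -, hl, h3, h4⟩ := floor_argIn (v - u)
  have hpi : 0 < π / 3 := by positivity
  simp only [cone, coneIdx, hk, hl, Set.mem_ofPred_eq, Set.mem_Ico, Nat.add_right_cancel_iff]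
  push_cast
  rw [add_sub_cancel_right]
  refine and_congr_right fun _ => ⟨fun ⟨h5, h6⟩ => ?_, ?_⟩
  · have a1 : (k : ℝ) < l + 1 := lt_of_mul_lt_mul_right (h1.trans_lt h6) hpi.le
    have a2 : (l : ℝ) < k + 1 := lt_of_mul_lt_mul_right (h5.trans_lt h2) hpi.le
    norm_cast at a1 a2
    omega
  · rintro rfl; exact ⟨h1, h2⟩

/-- The number of the cone, counted from `0`, read off from the signs of `a`, `b` and `a + b`. -/
def sector (a b : ℝ) : ℕ :=
  if 0 < b then (if 0 < a then 0 else if 0 < a + b then 1 else 2)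
  else (if a < 0 then 3 else if a + b < 0 then 4 else 5)

theorem sector_eq_iff {a b c d : ℝ} (ha : a ≠ 0) (hs : a + b ≠ 0)
    (hc : c ≠ 0) (ht : c + d ≠ 0) :
    sector a b = sector c d ↔
      (0 < a ↔ 0 < c) ∧ (0 < b ↔ 0 < d) ∧ (0 < a + b ↔ 0 < c + d) := by
  unfold sector
  grind

theorem sin_nonpos_of_pi_le {x : ℝ} (h1 : π ≤ x) (h2 : x ≤ 2 * π) : sin x ≤ 0 := by
  have := sin_nonneg_of_nonneg_of_le_pi (x := x - π) (by linarith) (by linarith)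
  rw [sin_sub_pi] at this; linarith

/-- Cone index and projective distance in oblique coordinates. The six cases are the six cones; in
each of them the position of the angle fixes the signs of `a`, `b` and `a + b`. -/
theorem coneIdx_pt {u v : ℂ} {a b : ℝ} (huv : v - u = pt a b) (ha : a ≠ 0) (hb : b ≠ 0)
    (hs : a + b ≠ 0) : coneIdx u v = sector a b + 1 ∧
      projDist u v = √3 / 2 * max |a| (max |b| |a + b|) := by
  obtain ⟨k, hk6, hk, h1, h2⟩ := floor_argIn (pt a b)
  obtain ⟨e1, e2, e3⟩ := argIn_pt a b
  have h3 : 0 < √3 / 2 := by positivity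
  have hr : 0 ≤ ‖pt a b‖ := norm_nonneg _
  have hidx : coneIdx u v = k + 1 := by rw [coneIdx, huv, hk]
  have hpos : ∀ {c t : ℝ}, c ≠ 0 → √3 / 2 * c = ‖pt a b‖ * t → 0 ≤ t → 0 < c := fun hc h ht =>
    lt_of_le_of_ne (nonneg_of_mul_nonneg_right (h ▸ mul_nonneg hr ht) h3) hc.symm
  have hproj : projDist u v =
      (a + b / 2) * cos ((k : ℝ) * (π / 3) + π / 6) +
        √3 / 2 * b * sin ((k : ℝ) * (π / 3) + π / 6) := by
    have : ∀ β : ℝ, Complex.exp (-(Complex.I * (β : ℂ))) = ⟨cos β, -sin β⟩ := by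
      intro β
      rw [show -(Complex.I * (β : ℂ)) = ((-β : ℝ) : ℂ) * Complex.I by push_cast; ring]
      apply Complex.ext
      · rw [Complex.exp_ofReal_mul_I_re, cos_neg]
      · rw [Complex.exp_ofReal_mul_I_im, sin_neg]
    rw [projDist, bisAngle, this, huv, hidx, Complex.mul_re]
    push_cast
    rw [add_sub_cancel_right]
    simp only [pt]
    ring
  have hA : 0 ≤ -sin (argIn (pt a b) - π / 3) → 0 < a := hpos ha (by rw [e2]; ring)
  have hA' : 0 ≤ sin (argIn (pt a b) - π / 3) → a < 0 := fun h =>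
    neg_pos.1 (hpos (neg_ne_zero.2 ha) (by linarith) h)
  have hB : 0 ≤ sin (argIn (pt a b)) → 0 < b := hpos hb e1
  have hB' : 0 ≤ -sin (argIn (pt a b)) → b < 0 := fun h =>
    neg_pos.1 (hpos (neg_ne_zero.2 hb) (by linarith) h)
  have hS : 0 ≤ sin (argIn (pt a b) + π / 3) → 0 < a + b := hpos hs e3
  have hS' : 0 ≤ -sin (argIn (pt a b) + π / 3) → a + b < 0 := fun h =>
    neg_pos.1 (hpos (neg_ne_zero.2 hs) (by linarith) h)
  generalize argIn (pt a b) = θ at *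
  have hpi := Real.pi_pos
  rw [hidx, hproj]
  interval_cases k <;> push_cast at h1 h2 ⊢
  · have qa : 0 < a := hA (by
      rw [← sin_neg]; exact sin_nonneg_of_nonneg_of_le_pi (by linarith) (by linarith))
    have qb : 0 < b := hB (sin_nonneg_of_nonneg_of_le_pi (by linarith) (by linarith))
    have qs : 0 < a + b := hS (sin_nonneg_of_nonneg_of_le_pi (by linarith) (by linarith))
    rw [show (0 : ℝ) * (π / 3) + π / 6 = π / 6 by ring,
      cos_pi_div_six, sin_pi_div_six]
    rw [abs_of_pos qa, abs_of_pos qb, abs_of_pos qs]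
    refine ⟨?_, by rw [max_eq_right (a := b) (by linarith), max_eq_right (by linarith)]; ring⟩
    simp [sector, qa, qb]
  · have qa : a < 0 := hA' (sin_nonneg_of_nonneg_of_le_pi (by linarith) (by linarith))
    have qb : 0 < b := hB (sin_nonneg_of_nonneg_of_le_pi (by linarith) (by linarith))
    have qs : 0 < a + b := hS (sin_nonneg_of_nonneg_of_le_pi (by linarith) (by linarith))
    rw [show (1 : ℝ) * (π / 3) + π / 6 = π / 2 by ring,
      cos_pi_div_two, sin_pi_div_two]
    rw [abs_of_neg qa, abs_of_pos qb, abs_of_pos qs]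
    refine ⟨?_, by rw [max_eq_left (b := a + b) (by linarith), max_eq_right (by linarith)]; ring⟩
    simp [sector, qb, qs, qa.not_gt]
  · have qa : a < 0 := hA' (sin_nonneg_of_nonneg_of_le_pi (by linarith) (by linarith))
    have qb : 0 < b := hB (sin_nonneg_of_nonneg_of_le_pi (by linarith) (by linarith))
    have qs : a + b < 0 := hS' (neg_nonneg.2 (sin_nonpos_of_pi_le (by linarith) (by linarith)))
    rw [show (2 : ℝ) * (π / 3) + π / 6 = π - π / 6 by ring,
      cos_pi_sub, sin_pi_sub, cos_pi_div_six, sin_pi_div_six]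
    rw [abs_of_neg qa, abs_of_pos qb, abs_of_neg qs]
    refine ⟨?_, by rw [max_eq_left (max_le (by linarith) (by linarith))]; ring⟩
    simp [sector, qb, qa.not_gt, qs.not_gt]
  · have qa : a < 0 := hA' (sin_nonneg_of_nonneg_of_le_pi (by linarith) (by linarith))
    have qb : b < 0 := hB' (neg_nonneg.2 (sin_nonpos_of_pi_le (by linarith) (by linarith)))
    have qs : a + b < 0 := hS' (neg_nonneg.2 (sin_nonpos_of_pi_le (by linarith) (by linarith)))
    rw [show (3 : ℝ) * (π / 3) + π / 6 = π / 6 + π by ring,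
      cos_add_pi, sin_add_pi, cos_pi_div_six, sin_pi_div_six]
    rw [abs_of_neg qa, abs_of_neg qb, abs_of_neg qs]
    refine ⟨?_, by rw [max_eq_right (a := -b) (by linarith), max_eq_right (by linarith)]; ring⟩
    simp [sector, qa, qb.not_gt]
  · have qa : 0 < a := hA (neg_nonneg.2 (sin_nonpos_of_pi_le (by linarith) (by linarith)))
    have qb : b < 0 := hB' (neg_nonneg.2 (sin_nonpos_of_pi_le (by linarith) (by linarith)))
    have qs : a + b < 0 := hS' (neg_nonneg.2 (sin_nonpos_of_pi_le (by linarith) (by linarith)))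
    rw [show (4 : ℝ) * (π / 3) + π / 6 = π / 2 + π by ring,
      cos_add_pi, sin_add_pi, cos_pi_div_two, sin_pi_div_two]
    rw [abs_of_pos qa, abs_of_neg qb, abs_of_neg qs]
    refine ⟨?_, by rw [max_eq_left (a := -b) (by linarith), max_eq_right (by linarith)]; ring⟩
    simp [sector, qs, qa.not_gt, qb.not_gt]
  · have qa : 0 < a := hA (neg_nonneg.2 (sin_nonpos_of_pi_le (by linarith) (by linarith)))
    have qb : b < 0 := hB' (neg_nonneg.2 (sin_nonpos_of_pi_le (by linarith) (by linarith)))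
    have qs : 0 < a + b := hS (by
      rw [← sin_sub_two_pi]; exact sin_nonneg_of_nonneg_of_le_pi (by linarith) (by linarith))
    rw [show (5 : ℝ) * (π / 3) + π / 6 = 2 * π - π / 6 by ring,
      cos_two_pi_sub, sin_two_pi_sub, cos_pi_div_six, sin_pi_div_six]
    rw [abs_of_pos qa, abs_of_neg qb, abs_of_pos qs]
    refine ⟨?_, by rw [max_eq_left (max_le (by linarith) (by linarith))]; ring⟩
    simp [sector, qa.not_gt, qb.not_gt, qs.not_gt]

/-- On the six rays `sin 3θ = 0`, and `sin 3θ = -4 sin θ sin (θ - π/3) sin (θ + π/3)` is a multiple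
of `a * b * (a + b)`. -/
theorem argIn_pt_ne {a b : ℝ} (ha : a ≠ 0) (hb : b ≠ 0) (hs : a + b ≠ 0) (j : ℕ) :
    argIn (pt a b) ≠ j * (π / 3) := by
  intro h
  obtain ⟨e1, e2, e3⟩ := argIn_pt a b
  have h3 : √3 / 2 ≠ 0 := by positivity
  have hsin : sin (3 * argIn (pt a b)) = 0 := by
    rw [h, show 3 * (j * (π / 3)) = j * π by ring]; exact sin_nat_mul_pi j
  have hq : √3 * √3 = 3 := Real.mul_self_sqrt (by norm_num)
  have hprod : (√3 / 2 * b) * (√3 / 2 * a) * (√3 / 2 * (a + b)) = 0 := by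
    rw [e1, e2, e3, sin_sub, sin_add, cos_pi_div_three, sin_pi_div_three]
    rw [sin_three_mul] at hsin
    generalize argIn (pt a b) = θ at *
    have hcs := sin_sq_add_cos_sq θ
    linear_combination (‖pt a b‖ ^ 3 / 4) * hsin + (‖pt a b‖ ^ 3 * sin θ * 3 / 4) * hcs +
      (‖pt a b‖ ^ 3 * sin θ * cos θ ^ 2 / 4) * hq
  exact mul_ne_zero (mul_ne_zero (mul_ne_zero h3 hb) (mul_ne_zero h3 ha)) (mul_ne_zero h3 hs) hprod

/-! ### Transfer of the edges to the complex plane -/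

section bridge
variable {x y : ι → ℝ}

theorem coneIdx_point (g : Generic x y) {i j : ι} (h : i ≠ j) :
    coneIdx (pt (x i) (y i)) (pt (x j) (y j)) = sector (x j - x i) (y j - y i) + 1 ∧
      projDist (pt (x i) (y i)) (pt (x j) (y j)) = √3 / 2 * hexDist x y i j := by
  have hg := g j i h.symm
  have hs : (x j - x i) + (y j - y i) = (x j + y j) - (x i + y i) := by ring
  have := coneIdx_pt (pt_sub (x j) (y j) (x i) (y i)) (sub_ne_zero.2 hg.1) (sub_ne_zero.2 hg.2.1)
    (hs ▸ sub_ne_zero.2 hg.2.2)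
  rwa [hs] at this

theorem pt_injective (g : Generic x y) : Function.Injective fun i => pt (x i) (y i) := by
  intro i j h
  by_contra hij
  have h3 : √3 / 2 ≠ 0 := by positivity
  exact (g i j hij).2.1 (mul_left_cancel₀ h3 (congrArg Complex.im h))

theorem coneIdx_eq_iff (g : Generic x y) {i j k : ι} (hj : j ≠ i) (hk : k ≠ i) :
    coneIdx (pt (x i) (y i)) (pt (x k) (y k)) = coneIdx (pt (x i) (y i)) (pt (x j) (y j)) ↔
      SameCone x y i j k := by
  have hgj := g j i hj
  have hgk := g k i hk
  have hs : ∀ j, (x j - x i) + (y j - y i) = (x j + y j) - (x i + y i) := fun j => by ring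
  rw [(coneIdx_point g hj.symm).1, (coneIdx_point g hk.symm).1, Nat.add_right_cancel_iff, eq_comm,
    sector_eq_iff (sub_ne_zero.2 hgj.1) (hs j ▸ sub_ne_zero.2 hgj.2.2)
      (sub_ne_zero.2 hgk.1) (hs k ▸ sub_ne_zero.2 hgk.2.2), hs, hs]
  simp only [sub_pos, SameCone]

theorem thetaEdge_iff (g : Generic x y) {S : Finset ℂ}
    (hS : ∀ w, w ∈ S ↔ ∃ i, pt (x i) (y i) = w) (i j : ι) :
    ThetaEdge S (pt (x i) (y i)) (pt (x j) (y j)) ↔ Theta x y i j := by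
  have h3 : 0 < √3 / 2 := by positivity
  have hmem : ∀ i, pt (x i) (y i) ∈ S := fun i => (hS _).2 ⟨i, rfl⟩
  have hinj : ∀ {i j}, pt (x i) (y i) = pt (x j) (y j) ↔ i = j := (pt_injective g).eq_iff
  constructor
  · rintro ⟨-, -, hne, h⟩
    have hji : j ≠ i := fun e => hne (by rw [e])
    refine ⟨hji.symm, fun k hk hs => ?_⟩
    have := h _ (hmem k) ((mem_cone_iff _ _ _).2
      ⟨fun e => hk (hinj.1 e), (coneIdx_eq_iff g hji hk).2 hs⟩)
    rw [(coneIdx_point g hji.symm).2, (coneIdx_point g hk.symm).2] at this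
    exact le_of_mul_le_mul_left this h3
  · rintro ⟨hij, h⟩
    refine ⟨hmem i, hmem j, fun e => hij (hinj.1 e).symm, fun w hw hc => ?_⟩
    obtain ⟨k, rfl⟩ := (hS w).1 hw
    obtain ⟨hne, hc⟩ := (mem_cone_iff _ _ _).1 hc
    have hk : k ≠ i := fun e => hne (by rw [e])
    rw [(coneIdx_point g hij).2, (coneIdx_point g hk.symm).2]
    exact mul_le_mul_of_nonneg_left (h k hk ((coneIdx_eq_iff g hij.symm hk).1 hc)) h3.le

theorem thetaTheta_of_edge (g : Generic x y) {S : Finset ℂ}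
    (hS : ∀ w, w ∈ S ↔ ∃ i, pt (x i) (y i) = w) {i j : ι}
    (h : ThetaThetaEdge S (pt (x i) (y i)) (pt (x j) (y j))) : ThetaTheta x y i j := by
  have h3 : 0 < √3 / 2 := by positivity
  have hij := (thetaEdge_iff g hS i j).1 h.1
  refine ⟨hij, fun k hk hs => ?_⟩
  have := h.2 _ ((thetaEdge_iff g hS k j).2 hk) ((coneIdx_eq_iff g hij.1 hk.1).2 hs)
  rw [(coneIdx_point g hij.1).2, (coneIdx_point g hk.1).2] at this
  exact le_of_mul_le_mul_left this h3

theorem dist_pt (i j : ι) : dist (pt (x i) (y i)) (pt (x j) (y j)) = eucl x y i j := by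
  rw [dist_comm, dist_eq_norm, pt_sub, norm_pt]; rfl

end bridge

/-- A path is at least as long as the increase of a potential that is 1-Lipschitz along edges. -/
theorem sub_le_pathLength {A : ℂ → ℂ → Prop} {ψ : ℂ → ℝ}
    (hψ : ∀ u v, A u v → |ψ u - ψ v| ≤ dist u v) :
    ∀ (p : List ℂ) (u v : ℂ), IsPath A u v p → ψ v - ψ u ≤ pathLength p
  | [], u, v, h => by simp [IsPath] at h
  | [a], u, v, h => by
    obtain ⟨-, h1, h2⟩ := h
    simp only [List.head?_cons, List.getLast?_singleton, Option.some.injEq] at h1 h2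
    subst h1 h2
    simp [pathLength]
  | a :: b :: l, u, v, h => by
    obtain ⟨h0, h1, h2⟩ := h
    have h0' := List.isChain_cons_cons.1 h0
    simp only [List.head?_cons, Option.some.injEq] at h1
    subst h1
    rw [List.getLast?_cons_cons] at h2
    have ih := sub_le_pathLength hψ (b :: l) b v ⟨h0'.2, rfl, h2⟩
    have hab := hψ a b h0'.1
    have hl : pathLength (a :: b :: l) = dist a b + pathLength (b :: l) := by
      simp [pathLength]
    rw [hl]
    linarith [neg_abs_le (ψ a - ψ b)]

/-- `ΘΘ₆` is not a spanner: for every real `t` there is a finite set `S` in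
general position and `u, v ∈ S` such that every path between `u` and `v` in `ΘΘ₆(S)` has
length greater than `t·|uv|`. -/
theorem thetaTheta6_not_spanner :
    ∀ t : ℝ, ∃ S : Finset ℂ, GenPos S ∧
      ∃ u ∈ S, ∃ v ∈ S, u ≠ v ∧
        ∀ p : List ℂ, IsPath (TTAdj S) u v p → t * dist u v < pathLength p := by
  intro t
  obtain ⟨n, hn⟩ := exists_nat_gt (32 * t)
  obtain ⟨ι, hι, C, -, hφ⟩ := Config.exists_config n
  have hW := C.W_pos
  have hH := C.H_pos
  have g := C.gen
  have hinj := pt_injective g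
  have hS : ∀ w, w ∈ (Set.finite_range fun i => pt (C.x i) (C.y i)).toFinset ↔
      ∃ i, pt (C.x i) (C.y i) = w := fun w => by simp
  generalize (Set.finite_range fun i => pt (C.x i) (C.y i)).toFinset = S at hS
  refine ⟨S, ?_, _, (hS _).2 ⟨C.P, rfl⟩, _, (hS _).2 ⟨C.Q, rfl⟩, fun h => C.hPQ (hinj h), ?_⟩
  · intro u hu v hv huv j
    obtain ⟨i, rfl⟩ := (hS u).1 hu
    obtain ⟨k, rfl⟩ := (hS v).1 hv
    have hg := g k i (fun e => huv (by rw [e]))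
    rw [pt_sub]
    refine argIn_pt_ne (sub_ne_zero.2 hg.1) (sub_ne_zero.2 hg.2.1) (fun e => hg.2.2 ?_) j
    linarith
  · intro p hp
    -- The potential on the plane: `φ` on the points of `S`, and `0` elsewhere.
    have hψ : ∀ i,
        Function.extend (fun i => pt (C.x i) (C.y i)) C.φ 0 (pt (C.x i) (C.y i)) = C.φ i :=
      fun i => hinj.extend_apply _ _ i
    have hmem : ∀ {u v}, ThetaThetaEdge S u v → ∃ i j, pt (C.x i) (C.y i) = u ∧
        pt (C.x j) (C.y j) = v ∧ ThetaTheta C.x C.y i j := by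
      intro u v h
      obtain ⟨i, rfl⟩ := (hS u).1 h.1.1
      obtain ⟨j, rfl⟩ := (hS v).1 h.1.2.1
      exact ⟨i, j, rfl, rfl, thetaTheta_of_edge g hS h⟩
    have key := sub_le_pathLength (A := TTAdj S)
      (ψ := Function.extend (fun i => pt (C.x i) (C.y i)) C.φ 0) (by
        rintro u v (h | h)
        · obtain ⟨i, j, rfl, rfl, hij⟩ := hmem h
          rw [hψ, hψ, dist_pt]
          exact C.lip i j hij
        · obtain ⟨i, j, rfl, rfl, hij⟩ := hmem h
          rw [hψ, hψ, abs_sub_comm, dist_comm, dist_pt]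
          exact C.lip i j hij) p _ _ hp
    rw [hψ, hψ] at key
    have hd : dist (pt (C.x C.P) (C.y C.P)) (pt (C.x C.Q) (C.y C.Q)) ≤ C.W + C.H := by
      rw [dist_pt]
      refine Real.sqrt_le_iff.2 ⟨by linarith, ?_⟩
      change C.W ^ 2 + C.W * C.H + C.H ^ 2 ≤ _
      nlinarith [mul_pos hW hH]
    have hn0 : (0 : ℝ) ≤ n := n.cast_nonneg
    have hd0 : 0 < dist (pt (C.x C.P) (C.y C.P)) (pt (C.x C.Q) (C.y C.Q)) :=
      dist_pos.2 fun h => C.hPQ (hinj h)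
    calc t * dist (pt (C.x C.P) (C.y C.P)) (pt (C.x C.Q) (C.y C.Q))
        < n / 32 * dist (pt (C.x C.P) (C.y C.P)) (pt (C.x C.Q) (C.y C.Q)) :=
          mul_lt_mul_of_pos_right (by linarith) hd0
      _ ≤ n / 32 * (C.W + C.H) := mul_le_mul_of_nonneg_left hd (by positivity)
      _ ≤ _ := hφ.trans key

end
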